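/- Let (p_n)_{n≥1} be a Schauder decomposition of a complex Banach space X, let c = (c_n)_{n≥1} be a complex sequence with bounded variation, and let M_c be the associated multiplier operator. Let λ ∈ ℂ be such that dist(λ, closure{c_n : n ≥ 1}) > 0. Then λ I − M_c is invertible in B(X) and (λ I − M_c)^{-1} = M_{d(λ)}, where d(λ) is the bounded-variation sequence d(λ)_n = (λ − c_n)^{-1}. -/

import Mathlib

open Filter Topology NormedSpace

/-- Average over all sign vectors `(ε_1,…,ε_k) ∈ {−1,1}^k` of `‖∑_j ε_j v_j‖`. -/
noncomputable def signAvg {X : Type*} [NormedAddCommGroup X] [NormedSpace ℂ X]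
    (k : ℕ) (v : Fin k → X) : ℝ :=
  (2 ^ k : ℝ)⁻¹ * ∑ ε : Fin k → Bool, ‖∑ j : Fin k, (if ε j then (1 : ℝ) else -1) • v j‖

/-- A set of bounded operators on `X` is `R`-bounded. -/
def IsRBounded {X : Type*} [NormedAddCommGroup X] [NormedSpace ℂ X]
    (F : Set (X →L[ℂ] X)) : Prop :=
  ∃ C : ℝ, 0 ≤ C ∧ ∀ (k : ℕ) (T : Fin k → X →L[ℂ] X) (x : Fin k → X),
    (∀ j, T j ∈ F) → signAvg k (fun j => (T j) (x j)) ≤ C * signAvg k x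

/-- `(p n)` is a Schauder decomposition of `X`: the `p n` are pairwise "orthogonal"
bounded projections whose partial sums converge pointwise to the identity.
(Indexing starts at `0`, corresponding to `n = 1` in the classical notation.) -/
def IsSchauderDecomposition {X : Type*} [NormedAddCommGroup X] [NormedSpace ℂ X]
    (p : ℕ → X →L[ℂ] X) : Prop :=
  (∀ n, (p n).comp (p n) = p n) ∧
  (∀ m n, m ≠ n → (p m).comp (p n) = 0) ∧
  (∀ x : X, Tendsto (fun N => ∑ n ∈ Finset.range N, p n x) atTop (nhds x))

/-- The partial sum projection `P_N = ∑_{n<N} p_n`. -/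
noncomputable def partialSum {X : Type*} [NormedAddCommGroup X] [NormedSpace ℂ X]
    (p : ℕ → X →L[ℂ] X) (N : ℕ) : X →L[ℂ] X :=
  ∑ n ∈ Finset.range N, p n

/-!
Multipliers compose like their symbols, `M_a M_b = M_(ab)`, because the projections are orthogonal.
So `λ I - M_c = M_(λ - c)` is inverted by `M_d`, `d = (λ - c)⁻¹`, as soon as `M_d` exists.
Since `|λ - c_n|` is bounded below, `d` again has bounded variation; Abel's test then gives the
pointwise convergence of `∑ d_n p_n x`, and Banach–Steinhaus the continuity of the limit.
-/

theorem cauchySeq_smul {R E : Type*} [SeminormedRing R] [SeminormedAddCommGroup E] [Module R E]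
    [IsBoundedSMul R E] {a : ℕ → R} {u : ℕ → E} (ha : CauchySeq a) (hu : CauchySeq u) :
    CauchySeq fun n => a n • u n := by
  obtain ⟨A, hA⟩ := ha.norm_bddAbove
  obtain ⟨U, hU⟩ := hu.norm_bddAbove
  rw [cauchySeq_iff_tendsto_dist_atTop_0] at ha hu ⊢
  have hbound : Tendsto (fun n : ℕ × ℕ => A * dist (u n.1) (u n.2) + dist (a n.1) (a n.2) * U)
      atTop (𝓝 0) := by
    simpa only [mul_zero, zero_mul, add_zero] using (hu.const_mul A).add (ha.mul_const U)
  refine squeeze_zero (fun _ => dist_nonneg) (fun n => ?_) hbound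
  calc dist (a n.1 • u n.1) (a n.2 • u n.2)
      ≤ dist (a n.1 • u n.1) (a n.1 • u n.2) + dist (a n.1 • u n.2) (a n.2 • u n.2) :=
        dist_triangle _ _ _
    _ ≤ ‖a n.1‖ * dist (u n.1) (u n.2) + dist (a n.1) (a n.2) * ‖u n.2‖ := by
        gcongr
        · exact dist_smul_le _ _ _
        · simpa only [dist_zero_right] using dist_pair_smul (a n.1) (a n.2) (u n.2)
    _ ≤ A * dist (u n.1) (u n.2) + dist (a n.1) (a n.2) * U := by
        gcongr
        · exact hA ⟨n.1, rfl⟩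
        · exact hU ⟨n.2, rfl⟩

theorem cauchySeq_sum_smul_of_summable_norm_sub {R E : Type*} [SeminormedRing R]
    [SeminormedAddCommGroup E] [Module R E] [IsBoundedSMul R E] {a : ℕ → R} {v : ℕ → E}
    (ha : Summable fun n => ‖a n - a (n + 1)‖)
    (hv : CauchySeq fun N => ∑ n ∈ Finset.range N, v n) :
    CauchySeq fun N => ∑ n ∈ Finset.range N, a n • v n := by
  have ha_cauchy : CauchySeq a :=
    cauchySeq_of_summable_dist (by simpa only [dist_eq_norm] using ha)
  obtain ⟨V, hV⟩ := hv.norm_bddAbove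
  have hboundary := cauchySeq_smul ha_cauchy ((cauchySeq_shift 1).2 hv)
  have hdiff : CauchySeq fun N =>
      ∑ n ∈ Finset.range N, (a (n + 1) - a n) • ∑ i ∈ Finset.range (n + 1), v i := by
    refine cauchySeq_range_of_norm_bounded (ha.mul_right V).hasSum.tendsto_sum_nat.cauchySeq
      fun n => (norm_smul_le _ _).trans ?_
    rw [norm_sub_rev]
    gcongr
    exact hV ⟨n + 1, rfl⟩
  rw [← cauchySeq_shift 1]
  simpa only [Finset.sum_range_by_parts a v, Nat.add_sub_cancel, ← sub_eq_add_neg]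
    using! hboundary.add hdiff.neg

theorem summable_norm_inv_sub_inv {K : Type*} [NormedDivisionRing K] {a : ℕ → K} {δ : ℝ}
    (hδ : 0 < δ) (hle : ∀ n, δ ≤ ‖a n‖) (ha : Summable fun n => ‖a n - a (n + 1)‖) :
    Summable fun n => ‖(a n)⁻¹ - (a (n + 1))⁻¹‖ := by
  have hne n : a n ≠ 0 := norm_pos_iff.1 (hδ.trans_le (hle n))
  refine (ha.div_const (δ * δ)).of_nonneg_of_le (fun _ => norm_nonneg _) fun n => ?_
  rw [← dist_eq_norm, dist_inv_inv₀ (hne n) (hne (n + 1)), dist_eq_norm]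
  gcongr <;> exact hle _

section Multiplier

variable {R X : Type*} [Semiring R] [AddCommMonoid X] [TopologicalSpace X] [Module R X]

/-- `IsMultiplier p c M` says that `M` is the multiplier operator `M_c = ∑ c_n p_n` of the scalar
sequence `c` along the operators `p`, the series converging pointwise in its given order. For
`c = 1` and `M = 1` this is the expansion `x = ∑ p_n x` of a Schauder decomposition. -/
def IsMultiplier (p : ℕ → X →L[R] X) (c : ℕ → R) (M : X →L[R] X) : Prop :=
  ∀ x, Tendsto (fun N => ∑ n ∈ Finset.range N, c n • p n x) atTop (𝓝 (M x))

namespace IsMultiplier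

theorem unique [T2Space X] {p : ℕ → X →L[R] X} {c : ℕ → R} {M M' : X →L[R] X}
    (hM : IsMultiplier p c M) (hM' : IsMultiplier p c M') : M = M' :=
  ContinuousLinearMap.ext fun x => tendsto_nhds_unique (hM x) (hM' x)

variable [ContinuousAdd X] [T2Space X] {p : ℕ → X →L[R] X} {a b : ℕ → R} {A B : X →L[R] X}

theorem proj_apply (hp : OrthogonalIdempotents p) (hA : IsMultiplier p a A) (m : ℕ) (x : X) :
    p m (A x) = a m • p m x := by
  have hproj n : p m (p n x) = if n = m then p m x else 0 := by
    split_ifs with h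
    · subst h
      exact DFunLike.congr_fun (hp.idem n) x
    · exact DFunLike.congr_fun (hp.ortho (Ne.symm h)) x
  refine tendsto_nhds_unique (((p m).continuous.tendsto _).comp (hA x))
    (tendsto_const_nhds.congr' ?_)
  filter_upwards [eventually_gt_atTop m] with N hN
  simp only [Function.comp_apply, map_sum, map_smul, hproj, smul_ite, smul_zero,
    Finset.sum_ite_eq', Finset.mem_range, hN, if_true]

theorem mul (hp : OrthogonalIdempotents p) (hA : IsMultiplier p a A) (hB : IsMultiplier p b B) :
    IsMultiplier p (a * b) (A * B) := fun x => by
  simpa only [hB.proj_apply hp, smul_smul] using! hA (B x)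

theorem mul_eq_one (hp : OrthogonalIdempotents p) (hA : IsMultiplier p a A)
    (hB : IsMultiplier p b B) (hone : IsMultiplier p 1 1) (hab : a * b = 1) : A * B = 1 :=
  (hab ▸ hA.mul hp hB).unique hone

theorem isUnit_and_inverse_eq (hp : OrthogonalIdempotents p) (hA : IsMultiplier p a A)
    (hB : IsMultiplier p b B) (hone : IsMultiplier p 1 1) (hab : a * b = 1) (hba : b * a = 1) :
    IsUnit A ∧ Ring.inverse A = B :=
  let u : (X →L[R] X)ˣ := ⟨A, B, hA.mul_eq_one hp hB hone hab, hB.mul_eq_one hp hA hone hba⟩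
  ⟨u.isUnit, Ring.inverse_unit u⟩

end IsMultiplier

end Multiplier

theorem IsMultiplier.smul_one_sub {R X : Type*} [CommRing R] [AddCommGroup X] [TopologicalSpace X]
    [IsTopologicalAddGroup X] [Module R X] [ContinuousConstSMul R X] {p : ℕ → X →L[R] X}
    {c : ℕ → R} {M : X →L[R] X} (hone : IsMultiplier p 1 1) (hM : IsMultiplier p c M) (r : R) :
    IsMultiplier p (fun n => r - c n) (r • (1 : X →L[R] X) - M) := fun x => by
  refine (((hone x).const_smul r).sub (hM x)).congr fun N => ?_
  simp only [Pi.one_apply, one_smul, Finset.smul_sum, ← Finset.sum_sub_distrib, sub_smul]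

section Banach

variable {𝕜 X : Type*} [NontriviallyNormedField 𝕜] [NormedAddCommGroup X] [NormedSpace 𝕜 X]
  [CompleteSpace X] {p : ℕ → X →L[𝕜] X}

theorem exists_isMultiplier_of_forall_cauchySeq {c : ℕ → 𝕜}
    (h : ∀ x, CauchySeq fun N => ∑ n ∈ Finset.range N, c n • p n x) :
    ∃ M, IsMultiplier p c M := by
  choose f hf using fun x => cauchySeq_tendsto_of_complete (h x)
  let S (N : ℕ) : X →L[𝕜] X := ∑ n ∈ Finset.range N, c n • p n
  have hS : Tendsto (fun N x => S N x) atTop (𝓝 f) :=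
    tendsto_pi_nhds.2 fun x => (hf x).congr fun N => by
      simp only [S, sum_apply, smul_apply]
  exact ⟨continuousLinearMapOfTendsto S hS, hf⟩

theorem IsMultiplier.exists_of_summable_norm_sub {c : ℕ → 𝕜} (hone : IsMultiplier p 1 1)
    (hc : Summable fun n => ‖c n - c (n + 1)‖) : ∃ M, IsMultiplier p c M :=
  exists_isMultiplier_of_forall_cauchySeq fun x =>
    cauchySeq_sum_smul_of_summable_norm_sub hc <| by
      simpa only [Pi.one_apply, one_smul] using (hone x).cauchySeq

theorem IsMultiplier.isUnit_and_isMultiplier_inverse {a : ℕ → 𝕜} {A : X →L[𝕜] X}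
    (hp : OrthogonalIdempotents p) (hA : IsMultiplier p a A) (hone : IsMultiplier p 1 1)
    (hne : ∀ n, a n ≠ 0) (hinv : Summable fun n => ‖(a n)⁻¹ - (a (n + 1))⁻¹‖) :
    IsUnit A ∧ IsMultiplier p (fun n => (a n)⁻¹) (Ring.inverse A) := by
  obtain ⟨B, hB⟩ := hone.exists_of_summable_norm_sub hinv
  obtain ⟨hunit, hinverse⟩ := hA.isUnit_and_inverse_eq hp hB hone
    (funext fun n => mul_inv_cancel₀ (hne n)) (funext fun n => inv_mul_cancel₀ (hne n))
  exact ⟨hunit, hinverse ▸ hB⟩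

theorem statement14_general (hp : OrthogonalIdempotents p) (hone : IsMultiplier p 1 1)
    {c : ℕ → 𝕜} (hbv : Summable fun n => ‖c n - c (n + 1)‖) {M : X →L[𝕜] X}
    (hM : IsMultiplier p c M) {lam : 𝕜}
    (hlam : 0 < Metric.infDist lam (closure (Set.range c))) :
    IsUnit (lam • (1 : X →L[𝕜] X) - M) ∧
    Summable (fun n => ‖(lam - c n)⁻¹ - (lam - c (n + 1))⁻¹‖) ∧
    IsMultiplier p (fun n => (lam - c n)⁻¹) (Ring.inverse (lam • (1 : X →L[𝕜] X) - M)) := by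
  have hdist n : Metric.infDist lam (closure (Set.range c)) ≤ ‖lam - c n‖ := by
    rw [← dist_eq_norm]
    exact Metric.infDist_le_dist_of_mem (subset_closure ⟨n, rfl⟩)
  have hne n : lam - c n ≠ 0 := norm_pos_iff.1 (hlam.trans_le (hdist n))
  have hinv : Summable fun n => ‖(lam - c n)⁻¹ - (lam - c (n + 1))⁻¹‖ :=
    summable_norm_inv_sub_inv hlam hdist <| by
      simpa only [sub_sub_sub_cancel_left, norm_sub_rev] using hbv
  obtain ⟨hunit, hinverse⟩ :=
    (hone.smul_one_sub hM lam).isUnit_and_isMultiplier_inverse hp hone hne hinv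
  exact ⟨hunit, hinv, hinverse⟩

end Banach

namespace IsSchauderDecomposition

variable {X : Type*} [NormedAddCommGroup X] [NormedSpace ℂ X] {p : ℕ → X →L[ℂ] X}

theorem orthogonalIdempotents (hp : IsSchauderDecomposition p) : OrthogonalIdempotents p :=
  ⟨hp.1, hp.2.1⟩

theorem isMultiplier_one (hp : IsSchauderDecomposition p) : IsMultiplier p 1 1 := fun x => by
  simpa only [Pi.one_apply, one_smul] using! hp.2.2 x

end IsSchauderDecomposition

/-- If `dist(λ, closure{c_n}) > 0`, then `λ I − M_c` is invertible with inverse the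
multiplier associated with the bounded-variation sequence `((λ − c_n)⁻¹)_n`. -/
theorem statement14 {X : Type*} [NormedAddCommGroup X] [NormedSpace ℂ X] [CompleteSpace X]
    (p : ℕ → X →L[ℂ] X) (hp : IsSchauderDecomposition p)
    (c : ℕ → ℂ) (hbv : Summable fun n => ‖c n - c (n + 1)‖)
    (M : X →L[ℂ] X)
    (hM : ∀ x : X, Tendsto (fun N => ∑ n ∈ Finset.range N, c n • p n x) atTop (nhds (M x)))
    (lam : ℂ) (hlam : 0 < Metric.infDist lam (closure (Set.range c))) :
    IsUnit (lam • (1 : X →L[ℂ] X) - M) ∧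
    Summable (fun n => ‖(lam - c n)⁻¹ - (lam - c (n + 1))⁻¹‖) ∧
    ∀ x : X, Tendsto (fun N => ∑ n ∈ Finset.range N, (lam - c n)⁻¹ • p n x)
      atTop (nhds (Ring.inverse (lam • (1 : X →L[ℂ] X) - M) x)) :=
  statement14_general hp.orthogonalIdempotents hp.isMultiplier_one hbv hM hlam
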